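/- Let X be a simplicial complex on a finite vertex set V, let τ_1, τ_2 be disjoint subsets of V, let v ∈ τ_1, and set σ_1 = τ_1 \ {v} and σ_2 = τ_2 ∪ {v}. Define Z_1 = lk(X[V \ τ_1], τ_2) and Z_2 = str(lk(X[V \ σ_1], τ_2), v). Then Z_1 ∪ Z_2 = lk(X[V \ σ_1], τ_2) and Z_1 ∩ Z_2 = lk(X[V \ σ_1], σ_2). -/

import Mathlib

open Finset

/-- An abstract simplicial complex on the vertex type `V`: a set of finite subsets
("simplices") closed under taking subsets. -/
def IsComplex {V : Type*} (X : Set (Finset V)) : Prop :=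
  ∀ σ ∈ X, ∀ τ, τ ⊆ σ → τ ∈ X

variable {V : Type*}

/-- The induced subcomplex `X[S] = {σ ∈ X : σ ⊆ S}`. -/
def induce (X : Set (Finset V)) (S : Finset V) : Set (Finset V) :=
  {σ | σ ∈ X ∧ σ ⊆ S}

/-- The link `lk(X,τ) = {σ : σ ∪ τ ∈ X, σ ∩ τ = ∅}`; it is the void complex if `τ ∉ X`. -/
def link [DecidableEq V] (X : Set (Finset V)) (τ : Finset V) : Set (Finset V) :=
  {σ | σ ∪ τ ∈ X ∧ Disjoint σ τ}

/-- The star `str(X,τ) = {σ ∈ X : σ ∪ τ ∈ X}`. -/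
def star [DecidableEq V] (X : Set (Finset V)) (τ : Finset V) : Set (Finset V) :=
  {σ | σ ∈ X ∧ σ ∪ τ ∈ X}

/-- The Alexander dual `X^∨ = {A ⊆ V : V \ A ∉ X}` of a complex on the finite vertex set
`V`. -/
def alexDual [Fintype V] [DecidableEq V] (X : Set (Finset V)) : Set (Finset V) :=
  {A | Aᶜ ∉ X}

/-! Put `K = lk(X[V \ σ₁], τ₂)`. Since `v ∉ τ₂`, deleting the vertex `v` commutes with taking the
link of `τ₂`, so `Z₁` is the deletion of `v` from `K`, while `Z₂` is the star of `v` in `K`. These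
cover `K` and meet in `lk(K, v)`, which is `lk(X[V \ σ₁], σ₂)` because an iterated link is the
link of the union. -/

/-- The deletion of the vertex set `τ` from `X`: the simplices of `X` disjoint from `τ`. This is
`induce X τᶜ` without the finiteness of `V` that the complement requires. -/
def deletion (X : Set (Finset V)) (τ : Finset V) : Set (Finset V) :=
  {σ | σ ∈ X ∧ Disjoint σ τ}

section

variable {X : Set (Finset V)}

protected theorem IsComplex.induce (hX : IsComplex X) (S : Finset V) : IsComplex (induce X S) :=
  fun σ hσ ρ hρ => ⟨hX σ hσ.1 ρ hρ, hρ.trans hσ.2⟩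

variable [DecidableEq V]

protected theorem IsComplex.link (hX : IsComplex X) (τ : Finset V) : IsComplex (link X τ) :=
  fun σ hσ ρ hρ => ⟨hX (σ ∪ τ) hσ.1 (ρ ∪ τ) (union_subset_union_left hρ), hσ.2.mono_left hρ⟩

theorem deletion_induce (X : Set (Finset V)) (S τ : Finset V) :
    deletion (induce X S) τ = induce X (S \ τ) := by
  ext σ
  simp only [deletion, induce, Set.mem_ofPred_eq, subset_sdiff, and_assoc]

theorem link_deletion {τ ρ : Finset V} (h : Disjoint τ ρ) :
    link (deletion X ρ) τ = deletion (link X τ) ρ := by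
  ext σ
  simp only [link, deletion, Set.mem_ofPred_eq, disjoint_union_left]
  tauto

theorem link_link {τ ρ : Finset V} (h : Disjoint τ ρ) :
    link (link X τ) ρ = link X (τ ∪ ρ) := by
  ext σ
  have union_right_comm : σ ∪ ρ ∪ τ = σ ∪ (τ ∪ ρ) := by rw [union_assoc, union_comm ρ]
  simp only [link, Set.mem_ofPred_eq, union_right_comm, disjoint_union_left, disjoint_union_right]
  have hρτ : Disjoint ρ τ := h.symm
  tauto

theorem deletion_inter_star (hX : IsComplex X) (τ : Finset V) :
    deletion X τ ∩ star X τ = link X τ := by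
  ext σ
  constructor
  · rintro ⟨⟨-, hdisj⟩, -, hunion⟩
    exact ⟨hunion, hdisj⟩
  · rintro ⟨hunion, hdisj⟩
    have hσ : σ ∈ X := hX (σ ∪ τ) hunion σ subset_union_left
    exact ⟨⟨hσ, hdisj⟩, hσ, hunion⟩

theorem deletion_singleton_union_star (X : Set (Finset V)) (v : V) :
    deletion X {v} ∪ star X {v} = X := by
  ext σ
  constructor
  · rintro (hσ | hσ) <;> exact hσ.1
  · intro hσ
    by_cases hv : v ∈ σ
    · have hunion : σ ∪ {v} = σ := union_eq_left.2 (singleton_subset_iff.2 hv)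
      exact .inr ⟨hσ, hunion.symm ▸ hσ⟩
    · exact .inl ⟨hσ, disjoint_singleton_right.2 hv⟩

theorem link_star_union_inter_general (hX : IsComplex X) (S : Finset V) {τ : Finset V} {v : V}
    (hv : v ∉ τ) :
    link (induce X (S.erase v)) τ ∪ star (link (induce X S) τ) {v} = link (induce X S) τ ∧
      link (induce X (S.erase v)) τ ∩ star (link (induce X S) τ) {v} =
        link (induce X S) (insert v τ) := by
  have hdisj : Disjoint τ {v} := disjoint_singleton_right.2 hv
  have deletion_eq : link (induce X (S.erase v)) τ = deletion (link (induce X S) τ) {v} := by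
    rw [← sdiff_singleton_eq_erase, ← deletion_induce, link_deletion hdisj]
  have link_eq : link (induce X S) (insert v τ) = link (link (induce X S) τ) {v} := by
    rw [link_link hdisj, union_singleton]
  rw [deletion_eq, link_eq]
  exact ⟨deletion_singleton_union_star _ v, deletion_inter_star ((hX.induce S).link τ) {v}⟩

end

/-- **The Mayer–Vietoris decomposition used in Proposition 2.3.**
Let `τ₁, τ₂` be disjoint subsets of the finite vertex set `V`, let `v ∈ τ₁`, and put
`σ₁ = τ₁ \ {v}`, `σ₂ = τ₂ ∪ {v}`,
`Z₁ = lk(X[V \ τ₁], τ₂)` and `Z₂ = str(lk(X[V \ σ₁], τ₂), v)`.  Then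
`Z₁ ∪ Z₂ = lk(X[V \ σ₁], τ₂)` and `Z₁ ∩ Z₂ = lk(X[V \ σ₁], σ₂)`. -/
theorem link_star_union_inter
    {V : Type} [Fintype V] [DecidableEq V]
    (X : Set (Finset V)) (hX : IsComplex X)
    (τ₁ τ₂ : Finset V) (hdisj : Disjoint τ₁ τ₂) (v : V) (hv : v ∈ τ₁) :
    link (induce X τ₁ᶜ) τ₂ ∪ star (link (induce X (τ₁.erase v)ᶜ) τ₂) {v} =
        link (induce X (τ₁.erase v)ᶜ) τ₂ ∧ 
      link (induce X τ₁ᶜ) τ₂ ∩ star (link (induce X (τ₁.erase v)ᶜ) τ₂) {v} =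
        link (induce X (τ₁.erase v)ᶜ) (insert v τ₂) := by
  have erase_compl : (τ₁.erase v)ᶜ.erase v = τ₁ᶜ := by
    rw [compl_erase, erase_insert (notMem_compl.2 hv)]
  exact erase_compl ▸ link_star_union_inter_general hX (τ₁.erase v)ᶜ (disjoint_left.1 hdisj hv)
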